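/- arXiv:1909.05230 — 5 statements merged into one kernel-verified Lean document; each statement's English description precedes it below -/
import Mathlib

section
/- For every ε > 0 there exists τ = τ(ε) ∈ ℕ such that for every finite collection {(x̂_j, n_j)}_{j=1}^{ℓ} ⊂ 𝒢̂ there exist integers 0 ≤ τ_j ≤ τ (for 2 ≤ j ≤ ℓ) and a point ẑ ∈ N such that, setting r_1 = 0 and r_j = r_{j−1} + n_{j−1} + τ_j for 2 ≤ j ≤ ℓ, one has d(g^m(x̂_j), g^{r_j + m}(ẑ)) ≤ ε for all 0 ≤ m ≤ n_j and all 1 ≤ j ≤ ℓ. (Specification at all scales, with gaps bounded by τ, for the collection 𝒢̂ of good orbit segments of g.) -/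
/-- The set `Ω_ρ = ⋃_{x ∈ Ω} B_ρ(x)`. -/
def Omr {N : Type*} [MetricSpace N] (Ω : Set N) (ρ : ℝ) : Set N :=
  ⋃ x ∈ Ω, Metric.ball x ρ

/-- The collection of good orbit segments: `(x̂,n)` is good if `n = 0` or for every
`j ∈ {1,…,n}` the average of `χ_A` along the last `j` iterates is `< α`. -/
def goodSeg {X : Type*} (f : X → X) (A : Set X) (α : ℝ) : Set (X × ℕ) :=
  {p | p.2 = 0 ∨ ∀ j : ℕ, 1 ≤ j → j ≤ p.2 →
    (1 / (j : ℝ)) * ∑ i ∈ Finset.Ico (p.2 - j) p.2,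
      Set.indicator A (fun _ => (1 : ℝ)) (f^[i] p.1) < α}

noncomputable def lcAux {N : Type*} (A : Set N) (a b : ℝ) (x : N) : ℝ :=
  b + Set.indicator A (fun _ => (1 : ℝ)) x * (a - b)

lemma pull_step {N : Type*} [MetricSpace N] [CompactSpace N] [Nonempty N]
    (g : N → N) (hg : Continuous g)
    (Lf : N → ℝ)
    (hbranch : ∀ x : N, ∃ U : Set N, IsOpen U ∧ x ∈ U ∧ Set.InjOn g U ∧
      IsOpen (g '' U) ∧ ∀ y ∈ U, ∀ z ∈ U, dist y z ≤ Lf x * dist (g y) (g z))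
    (lamu L : ℝ) (hlamu : lamu ∈ Set.Ioo (0 : ℝ) 1) (hL : 1 < L)
    (Ω : Set N)
    (hH1a : ∀ x ∈ Ω, Lf x ≤ L) (hH1b : ∀ x ∉ Ω, Lf x < lamu)
    (ρ : ℝ) (hρ : 0 < ρ) :
    ∃ δ > 0, ∀ x w : N, dist w (g x) < δ → ∃ y, g y = w ∧
      dist y x ≤ Real.exp (lcAux (Omr Ω ρ) (Real.log L) (Real.log lamu) x) * dist w (g x) := by
  obtain ⟨hl0, hl1⟩ := hlamu
  choose U hUo hxU _ hgU hUd using hbranch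
  have key : ∀ p : N, ∃ d > 0, ∃ V : Set N, IsOpen V ∧ p ∈ V ∧ V ⊆ U p ∧ V ⊆ Metric.ball p ρ ∧
      ∀ x ∈ V, Metric.ball (g x) d ⊆ g '' U p := by
    intro p
    obtain ⟨e, he, hb⟩ := Metric.isOpen_iff.1 (hgU p) (g p) ⟨p, hxU p, rfl⟩
    refine ⟨e / 2, by positivity, U p ∩ Metric.ball p ρ ∩ g ⁻¹' Metric.ball (g p) (e / 2),
      ((hUo p).inter Metric.isOpen_ball).inter (Metric.isOpen_ball.preimage hg),
      ⟨⟨hxU p, Metric.mem_ball_self hρ⟩, by simpa using he⟩, fun x hx => hx.1.1,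
      fun x hx => hx.1.2, ?_⟩
    intro x hx w hw
    apply hb
    have h1 : dist (g x) (g p) < e / 2 := hx.2
    have h2 : dist w (g x) < e / 2 := hw
    have := dist_triangle w (g x) (g p)
    rw [Metric.mem_ball]; linarith
  choose d hd V hVo hpV hVU hVb hVd using key
  obtain ⟨t, ht⟩ := isCompact_univ.elim_finite_subcover V hVo
    (fun p _ => Set.mem_iUnion.2 ⟨p, hpV p⟩)
  have hne : t.Nonempty := by
    obtain ⟨x⟩ := ‹Nonempty N›
    have := ht (Set.mem_univ x)
    simp only [Set.mem_iUnion] at this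
    obtain ⟨p, hp, _⟩ := this
    exact ⟨p, hp⟩
  refine ⟨t.inf' hne d, (Finset.lt_inf'_iff hne).2 (fun p _ => hd p), ?_⟩
  intro x w hw
  have := ht (Set.mem_univ x)
  simp only [Set.mem_iUnion] at this
  obtain ⟨p, hp, hxp⟩ := this
  have hw2 : dist w (g x) < d p := lt_of_lt_of_le hw (Finset.inf'_le d hp)
  obtain ⟨y, hy, rfl⟩ := hVd p x hxp hw2
  refine ⟨y, rfl, (hUd p y hy x (hVU p hxp)).trans ?_⟩
  apply mul_le_mul_of_nonneg_right _ dist_nonneg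
  unfold lcAux
  by_cases hx : x ∈ Omr Ω ρ
  · rw [Set.indicator_of_mem hx, one_mul, add_sub_cancel, Real.exp_log (by linarith)]
    by_cases hpΩ : p ∈ Ω
    · exact hH1a p hpΩ
    · linarith [hH1b p hpΩ]
  · rw [Set.indicator_of_notMem hx, zero_mul, add_zero, Real.exp_log hl0]
    refine (hH1b p fun hpΩ => hx ?_).le
    exact Set.mem_iUnion₂.2 ⟨p, hpΩ, hVb p hxp⟩

lemma pull_seg {N : Type*} [MetricSpace N] (g : N → N) (c : N → ℝ) (δ : ℝ)
    (h : ∀ x w : N, dist w (g x) < δ → ∃ y, g y = w ∧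
      dist y x ≤ Real.exp (c x) * dist w (g x)) (n : ℕ) :
    ∀ x : N, (∀ m ≤ n, ∑ i ∈ Finset.Ico m n, c (g^[i] x) ≤ 0) →
    ∀ w, dist w (g^[n] x) < δ → ∃ y, g^[n] y = w ∧ ∀ m ≤ n,
      dist (g^[m] y) (g^[m] x) ≤
        Real.exp (∑ i ∈ Finset.Ico m n, c (g^[i] x)) * dist w (g^[n] x) := by
  induction n with
  | zero =>
    intro x _ w _
    refine ⟨w, rfl, fun m hm => ?_⟩
    obtain rfl : m = 0 := by omega
    simp
  | succ n ih =>
    intro x hx w hw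
    have hs : ∀ m, ∑ i ∈ Finset.Ico m n, c (g^[i] (g x)) =
        ∑ i ∈ Finset.Ico (m+1) (n+1), c (g^[i] x) := by
      intro m
      rw [← Finset.sum_Ico_add' (fun i => c (g^[i] x)) m n 1]
      rfl
    obtain ⟨y, hy, hyd⟩ := ih (g x) (fun m hm => by rw [hs]; exact hx (m+1) (by omega)) w hw
    have h0 := hyd 0 (Nat.zero_le _)
    simp only [hs] at hyd h0
    simp only [Function.iterate_zero, id, zero_add] at h0
    have hle : Real.exp (∑ i ∈ Finset.Ico 1 (n+1), c (g^[i] x)) ≤ 1 :=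
      Real.exp_le_one_iff.2 (hx 1 (by omega))
    have hlt : dist y (g x) < δ := by
      refine lt_of_le_of_lt (h0.trans ?_) hw
      exact mul_le_of_le_one_left dist_nonneg hle
    obtain ⟨y', rfl, hy'd⟩ := h x y hlt
    refine ⟨y', hy, ?_⟩
    rintro (_ | m) hm
    · simp only [Function.iterate_zero, id]
      refine hy'd.trans ?_
      rw [Finset.sum_eq_sum_Ico_succ_bot (by omega : 0 < n+1), Real.exp_add, mul_assoc]
      exact mul_le_mul_of_nonneg_left h0 (Real.exp_pos _).le
    · exact hyd m (by omega)

lemma unif_exact {N : Type*} [MetricSpace N] [CompactSpace N]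
    (g : N → N)
    (hexact : ∀ U : Set N, IsOpen U → U.Nonempty → ∃ n : ℕ, g^[n] '' U = Set.univ)
    (e : ℝ) (he : 0 < e) :
    ∃ τ : ℕ, ∀ x z : N, ∃ w, dist w x < e ∧ g^[τ] w = z := by
  have hsurj : Function.Surjective g := by
    intro p
    by_contra hp
    have hne : ({p}ᶜ : Set N).Nonempty := ⟨g p, fun h => hp ⟨p, h⟩⟩
    obtain ⟨n, hn⟩ := hexact {p}ᶜ isOpen_compl_singleton hne
    have hpm : p ∈ g^[n] '' {p}ᶜ := hn ▸ Set.mem_univ p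
    obtain ⟨q, hq, hqp⟩ := hpm
    cases n with
    | zero => exact hq hqp
    | succ n => rw [Function.iterate_succ_apply'] at hqp; exact hp ⟨_, hqp⟩
  have h1 : ∀ p : N, ∃ n : ℕ, g^[n] '' Metric.ball p (e/2) = Set.univ := fun p =>
    hexact _ Metric.isOpen_ball ⟨p, Metric.mem_ball_self (by positivity)⟩
  choose k hk using h1
  obtain ⟨t, ht⟩ := isCompact_univ.elim_finite_subcover (fun p : N => Metric.ball p (e/2))
    (fun _ => Metric.isOpen_ball)
    (fun p _ => Set.mem_iUnion.2 ⟨p, Metric.mem_ball_self (by positivity)⟩)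
  refine ⟨t.sup k, fun x z => ?_⟩
  have := ht (Set.mem_univ x)
  simp only [Set.mem_iUnion] at this
  obtain ⟨p, hp, hxp⟩ := this
  obtain ⟨s, hs⟩ := Nat.exists_eq_add_of_le' (Finset.le_sup (f := k) hp)
  obtain ⟨v, hv⟩ := (hsurj.iterate s) z
  have hvm : v ∈ g^[k p] '' Metric.ball p (e/2) := hk p ▸ Set.mem_univ v
  obtain ⟨w, hw, hwv⟩ := hvm
  refine ⟨w, ?_, ?_⟩
  · have h2 : dist w p < e/2 := hw
    have h3 : dist x p < e/2 := hxp
    linarith [dist_triangle_right w x p]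
  · rw [hs, Function.iterate_add_apply, hwv, hv]

lemma good_sum {N : Type*} (g : N → N) (A : Set N) (lamu L α : ℝ)
    (hlamu : lamu ∈ Set.Ioo (0 : ℝ) 1) (hL : 1 < L)
    (hαlt : α < Real.log lamu / (Real.log lamu - Real.log L))
    (x : N) (n : ℕ) (h : (x, n) ∈ goodSeg g A α) :
    ∀ m ≤ n, ∑ i ∈ Finset.Ico m n, lcAux A (Real.log L) (Real.log lamu) (g^[i] x) ≤ 0 := by
  intro m hm
  have ha : 0 < Real.log L := Real.log_pos hL
  have hb : Real.log lamu < 0 := Real.log_neg hlamu.1 hlamu.2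
  rw [lt_div_iff_of_neg (by linarith)] at hαlt
  rcases hm.eq_or_lt with rfl | hlt
  · simp
  rcases h with h | h
  · simp only at h; omega
  have h2 := h (n - m) (by omega) (by simp)
  simp only at h2
  rw [Nat.sub_sub_self hm] at h2
  have hj : (0:ℝ) < ((n - m : ℕ) : ℝ) := by
    have : 0 < n - m := by omega
    exact_mod_cast this
  rw [one_div, inv_mul_lt_iff₀ hj] at h2
  unfold lcAux
  rw [Finset.sum_add_distrib, ← Finset.sum_mul, Finset.sum_const, Nat.card_Ico, nsmul_eq_mul]
  generalize (∑ i ∈ Finset.Ico m n, A.indicator (fun _ => (1:ℝ)) (g^[i] x)) = S at *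
  generalize ((n - m : ℕ) : ℝ) = j at *
  nlinarith [mul_pos hj (sub_pos.2 hαlt), mul_pos (sub_pos.2 h2) (by linarith : 0 < Real.log L - Real.log lamu)]

/-- Specification at all scales for the collection `𝒢̂` of good orbit
segments of a topologically exact local diffeomorphism `g` with Lipschitz inverse
branches satisfying (H1)-(H2): for every `ε > 0` there is a uniform gap bound `τ` such
that any finite list of good orbit segments can be `ε`-shadowed by a single orbit with
gaps at most `τ`. -/
theorem goodSeg_specification_base
    {N : Type*} [MetricSpace N] [CompactSpace N] [ConnectedSpace N]
    (g : N → N) (hg : Continuous g)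
    (Lf : N → ℝ) (hLfpos : ∀ x, 0 < Lf x)
    -- `g` is a local diffeomorphism with Lipschitz inverse branches with constant `Lf x`
    (hbranch : ∀ x : N, ∃ U : Set N, IsOpen U ∧ x ∈ U ∧ Set.InjOn g U ∧
      IsOpen (g '' U) ∧ ∀ y ∈ U, ∀ z ∈ U, dist y z ≤ Lf x * dist (g y) (g z))
    -- `g` is topologically exact
    (hexact : ∀ U : Set N, IsOpen U → U.Nonempty → ∃ n : ℕ, g^[n] '' U = Set.univ)
    (lamu L : ℝ) (hlamu : lamu ∈ Set.Ioo (0 : ℝ) 1) (hL : 1 < L)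
    (Ω : Set N) (hΩ : IsOpen Ω)
    -- (H1)
    (hH1a : ∀ x ∈ Ω, Lf x ≤ L) (hH1b : ∀ x ∉ Ω, Lf x < lamu)
    -- (H2): a finite cover of `N` by injectivity domains of `g`
    (P : Finset (Set N)) (hPcov : ⋃₀ (P : Set (Set N)) = Set.univ)
    (hPinj : ∀ U ∈ P, Set.InjOn g U)
    (ρ : ℝ) (hρ : 0 < ρ)
    (α : ℝ) (hα : α ∈ Set.Ioo (0 : ℝ) 1)
    (hαlt : α < Real.log lamu / (Real.log lamu - Real.log L)) :
    ∀ ε : ℝ, 0 < ε → ∃ τ : ℕ,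
      ∀ ℓ : ℕ, ∀ x : ℕ → N, ∀ nseq : ℕ → ℕ,
        (∀ j < ℓ, (x j, nseq j) ∈ goodSeg g (Omr Ω ρ) α) →
        ∃ τs : ℕ → ℕ, ∃ r : ℕ → ℕ, ∃ z : N,
          (∀ j : ℕ, 1 ≤ j → j < ℓ → τs j ≤ τ) ∧
          r 0 = 0 ∧
          (∀ j : ℕ, j + 1 < ℓ → r (j + 1) = r j + nseq j + τs (j + 1)) ∧
          (∀ j < ℓ, ∀ m ≤ nseq j, dist (g^[m] (x j)) (g^[r j + m] z) ≤ ε) := by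
  intro ε hε
  obtain ⟨δ, hδ, hstep⟩ := pull_step g hg Lf hbranch lamu L hlamu hL Ω hH1a hH1b ρ hρ
  obtain ⟨τ, hτ⟩ := unif_exact g hexact (min ε δ) (lt_min hε hδ)
  refine ⟨τ, fun ℓ x nseq hgood => ⟨fun _ => τ, fun j => ∑ i ∈ Finset.range j, (nseq i + τ), ?_⟩⟩
  have main : ∀ ℓ : ℕ, ∀ x : ℕ → N, ∀ nseq : ℕ → ℕ,
        (∀ j < ℓ, (x j, nseq j) ∈ goodSeg g (Omr Ω ρ) α) →
        ∃ z : N, ∀ j < ℓ, ∀ m ≤ nseq j,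
          dist (g^[m] (x j)) (g^[(∑ i ∈ Finset.range j, (nseq i + τ)) + m] z) ≤ ε := by
    intro ℓ
    induction ℓ with
    | zero => exact fun x _ _ => ⟨x 0, fun j hj => absurd hj (by omega)⟩
    | succ ℓ ih =>
      intro x nseq hgood
      obtain ⟨z, hz⟩ := ih (fun j => x (j+1)) (fun j => nseq (j+1))
        (fun j hj => hgood (j+1) (by omega))
      obtain ⟨w, hw, hwz⟩ := hτ (g^[nseq 0] (x 0)) z
      have hsum := good_sum g (Omr Ω ρ) lamu L α hlamu hL hαlt _ _ (hgood 0 (by omega))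
      obtain ⟨y, hy, hyd⟩ := pull_seg g _ δ hstep (nseq 0) (x 0) hsum w
        (hw.trans_le (min_le_right _ _))
      refine ⟨y, ?_⟩
      rintro (_ | j) hj m hm
      · simp only [Finset.range_zero, Finset.sum_empty, zero_add]
        rw [dist_comm]
        refine (hyd m hm).trans ?_
        refine (mul_le_of_le_one_left dist_nonneg (Real.exp_le_one_iff.2 (hsum m hm))).trans ?_
        exact (hw.trans_le (min_le_left _ _)).le
      · have h := hz j (by omega) m hm
        rw [Finset.sum_range_succ']
        have e : (∑ i ∈ Finset.range j, (nseq (i+1) + τ)) + (nseq 0 + τ) + m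
          = ((∑ i ∈ Finset.range j, (nseq (i+1) + τ)) + m) + (τ + nseq 0) := by ring
        rw [e, Function.iterate_add_apply _ _ (τ + nseq 0), Function.iterate_add_apply _ τ, hy, hwz]
        exact h
  obtain ⟨z, hz⟩ := main ℓ x nseq hgood
  refine ⟨z, fun _ _ _ => le_rfl, by simp, fun j _ => ?_, hz⟩
  simp only [Finset.sum_range_succ]
  ring
end

section
/- For any collection 𝒟̂ ⊂ N × ℕ of orbit segments for g, let 𝒟 = {(x,n) ∈ Λ × ℕ : (π(x), n) ∈ 𝒟̂} be its lift. Then the entropy of the lifted collection is bounded by that of the base collection: h(𝒟; f|_Λ) ≤ h(𝒟̂; g). -/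
open Filter

/-- The `n`-th Birkhoff sum of `φ` along the orbit of `x` under `T`. -/
noncomputable def birkhoff {X : Type*} (T : X → X) (φ : X → ℝ) (n : ℕ) (x : X) : ℝ :=
  ∑ k ∈ Finset.range n, φ (T^[k] x)

/-- The dynamical (Bowen) metric `d_n(x,y) = max_{0 ≤ k < n} d(T^k x, T^k y)`. -/
noncomputable def dynDist {X : Type*} [MetricSpace X] (T : X → X) (n : ℕ) (x y : X) : ℝ :=
  (((Finset.range n).sup fun k => nndist (T^[k] x) (T^[k] y) : NNReal) : ℝ)

/-- `E` is `(n,ε)`-separated for `T`. -/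
def IsDynSep {X : Type*} [MetricSpace X] (T : X → X) (n : ℕ) (ε : ℝ) (E : Finset X) : Prop :=
  ∀ x ∈ E, ∀ y ∈ E, x ≠ y → ε ≤ dynDist T n x y

/-- The partition sum `Λ^sep_n(𝒟,φ,ε)`: the supremum of `∑_{x ∈ E} e^{S_n φ(x)}` over
`(n,ε)`-separated sets `E ⊆ 𝒟_n`. -/
noncomputable def partSum {X : Type*} [MetricSpace X] (T : X → X) (φ : X → ℝ)
    (D : Set (X × ℕ)) (ε : ℝ) (n : ℕ) : ℝ :=
  sSup {s : ℝ | ∃ E : Finset X, (∀ x ∈ E, (x, n) ∈ D) ∧ IsDynSep T n ε E ∧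
    s = ∑ x ∈ E, Real.exp (birkhoff T φ n x)}

/-- The pressure `P(𝒟,φ,ε)` of `φ` on the collection of orbit segments `𝒟` at scale `ε`. -/
noncomputable def presScale {X : Type*} [MetricSpace X] (T : X → X) (φ : X → ℝ)
    (D : Set (X × ℕ)) (ε : ℝ) : EReal :=
  limsup (fun n : ℕ => ((Real.log (partSum T φ D ε n) / n : ℝ) : EReal)) atTop

/-- The pressure `P(𝒟,φ) = lim_{ε → 0} P(𝒟,φ,ε)`; since the scale pressure is monotone
as `ε` decreases, the limit is the supremum over positive scales. -/
noncomputable def pres {X : Type*} [MetricSpace X] (T : X → X) (φ : X → ℝ)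
    (D : Set (X × ℕ)) : EReal :=
  ⨆ (ε : ℝ) (_ : 0 < ε), presScale T φ D ε

/-- The entropy `h(𝒟) = P(𝒟,0)` of a collection of orbit segments. -/
noncomputable def entSeg {X : Type*} [MetricSpace X] (T : X → X) (D : Set (X × ℕ)) : EReal :=
  pres T (fun _ => (0 : ℝ)) D

/-- Topological entropy as pressure of the zero potential on all orbit segments. -/
noncomputable def htop {X : Type*} [MetricSpace X] (T : X → X) : EReal :=
  pres T (fun _ => (0 : ℝ)) Set.univ

/-- The attractor `Λ = ⋂_{n ≥ 0} f^n(M)`. -/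
def Lam {M : Type*} (f : M → M) : Set M :=
  ⋂ n : ℕ, f^[n] '' Set.univ

lemma aux_sep_bound {X : Type*} [MetricSpace X] [CompactSpace X] (ε : ℝ) (hε : 0 < ε) :
    ∃ K : ℕ, ∀ E : Finset X, (∀ x ∈ E, ∀ y ∈ E, x ≠ y → ε ≤ dist x y) → E.card ≤ K := by
  classical
  obtain ⟨t, -, htf, ht⟩ :=
    Metric.totallyBounded_iff.1 (isCompact_univ (X := X)).totallyBounded (ε / 2) (by positivity)
      |>.imp fun t h => (⟨trivial, h.1, h.2⟩ : True ∧ _ ∧ _)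
  have hc : ∀ x : X, ∃ c ∈ t, dist x c < ε / 2 := by
    intro x
    have := ht (Set.mem_univ x)
    simpa using this
  choose c hct hcd using hc
  refine ⟨htf.toFinset.card, fun E hE => ?_⟩
  refine Finset.card_le_card_of_injOn c (fun x _ => by simpa using hct x) ?_
  intro x hx y hy hxy
  by_contra hne
  have h1 := hE x hx y hy hne
  have h2 := dist_triangle_right x y (c x)
  have h3 := hcd x
  have h4 := hcd y
  rw [← hxy] at h4
  linarith

lemma aux_dyn_lt {X : Type*} [MetricSpace X] (T : X → X) (n : ℕ) (x y : X) (ε : ℝ) (hε : 0 < ε) :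
    dynDist T n x y < ε ↔ ∀ k < n, dist (T^[k] x) (T^[k] y) < ε := by
  lift ε to NNReal using hε.le
  unfold dynDist
  rw [NNReal.coe_lt_coe, Finset.sup_lt_iff (by simpa using hε)]
  simp only [Finset.mem_range, ← NNReal.coe_lt_coe, coe_nndist]

lemma aux_dyn_bound {X : Type*} [MetricSpace X] [CompactSpace X] (T : X → X) (hT : Continuous T)
    (n : ℕ) (ε : ℝ) (hε : 0 < ε) :
    ∃ K : ℕ, ∀ E : Finset X, IsDynSep T n ε E → E.card ≤ K := by
  have h : ∀ k : ℕ, ∃ δ > 0, ∀ x y : X, dist x y < δ → dist (T^[k] x) (T^[k] y) < ε := by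
    intro k
    have hu : UniformContinuous (T^[k]) :=
      CompactSpace.uniformContinuous_of_continuous (hT.iterate k)
    obtain ⟨δ, h1, h2⟩ := Metric.uniformContinuous_iff.1 hu ε hε
    exact ⟨δ, h1, fun x y hxy => h2 hxy⟩
  choose δ hδ hd using h
  have hm : ∃ δ' > 0, ∀ k < n, δ' ≤ δ k := by
    clear hd
    induction n with
    | zero => exact ⟨1, one_pos, by simp⟩
    | succ m ih =>
      obtain ⟨a, ha, h⟩ := ih
      refine ⟨min a (δ m), lt_min ha (hδ m), fun k hk => ?_⟩
      rcases Nat.lt_succ_iff_lt_or_eq.1 hk with h1 | rfl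
      · exact (min_le_left _ _).trans (h k h1)
      · exact min_le_right _ _
  obtain ⟨δ', hδ', hle⟩ := hm
  obtain ⟨K, hK⟩ := aux_sep_bound (X := X) δ' hδ'
  refine ⟨K, fun E hE => hK E fun x hx y hy hne => ?_⟩
  by_contra! hlt
  have := hE x hx y hy hne
  have h2 := (aux_dyn_lt T n x y ε hε).2 fun k hk => hd k x y (hlt.trans_le (hle k hk))
  linarith

lemma aux_partSum {X : Type*} [MetricSpace X] (T : X → X) (D : Set (X × ℕ)) (ε : ℝ) (n : ℕ) :
    partSum T (fun _ => (0 : ℝ)) D ε n =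
      sSup {s : ℝ | ∃ E : Finset X, (∀ x ∈ E, (x, n) ∈ D) ∧ IsDynSep T n ε E ∧
        s = (E.card : ℝ)} := by
  simp [partSum, birkhoff]

lemma aux_partSum_ge {X : Type*} [MetricSpace X] [CompactSpace X] (T : X → X) (hT : Continuous T)
    (D : Set (X × ℕ)) (ε : ℝ) (hε : 0 < ε) (n : ℕ) (E : Finset X) (h1 : ∀ x ∈ E, (x, n) ∈ D)
    (h2 : IsDynSep T n ε E) : (E.card : ℝ) ≤ partSum T (fun _ => (0 : ℝ)) D ε n := by
  rw [aux_partSum]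
  obtain ⟨K, hK⟩ := aux_dyn_bound T hT n ε hε
  refine le_csSup ⟨K, ?_⟩ ⟨E, h1, h2, rfl⟩
  rintro s ⟨F, -, h, rfl⟩
  exact_mod_cast hK F h

/-- A spanning separated set. -/
lemma aux_span {X : Type*} [MetricSpace X] [CompactSpace X] (T : X → X) (hT : Continuous T)
    (D : Set (X × ℕ)) (ε : ℝ) (hε : 0 < ε) (n : ℕ) :
    ∃ E : Finset X, (∀ x ∈ E, (x, n) ∈ D) ∧ IsDynSep T n ε E ∧
      ∀ x, (x, n) ∈ D → ∃ y ∈ E, dynDist T n x y < ε := by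
  classical
  obtain ⟨K, hK⟩ := aux_dyn_bound T hT n ε hε
  let P : ℕ → Prop := fun m => ∃ E : Finset X, (∀ x ∈ E, (x, n) ∈ D) ∧ IsDynSep T n ε E ∧
    E.card = m
  have h0 : P 0 := ⟨∅, by simp, by simp [IsDynSep], rfl⟩
  obtain ⟨E, h1, h2, h3⟩ := Nat.findGreatest_spec (Nat.zero_le K) h0
  refine ⟨E, h1, h2, fun x hx => ?_⟩
  by_contra! hcon
  have hcomm : ∀ a b : X, dynDist T n a b = dynDist T n b a := by
    intro a b
    simp only [dynDist, nndist_comm]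
  have hself : dynDist T n x x < ε := (aux_dyn_lt T n x x ε hε).2 (by simpa using fun _ _ => hε)
  have hxE : x ∉ E := fun h => absurd (hcon x h) (not_le.2 hself)
  have hsep : IsDynSep T n ε (insert x E) := by
    intro a ha b hb hab
    rcases Finset.mem_insert.1 ha with rfl | ha'
    · rcases Finset.mem_insert.1 hb with rfl | hb
      · exact absurd rfl hab
      · exact hcon b hb
    · rcases Finset.mem_insert.1 hb with rfl | hb
      · rw [hcomm]; exact hcon a ha'
      · exact h2 a ha' b hb hab
  have hP : P (insert x E).card := ⟨insert x E, by
    intro a ha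
    rcases Finset.mem_insert.1 ha with rfl | ha'
    · exact hx
    · exact h1 a ha', hsep, rfl⟩
  have := Nat.le_findGreatest (hK _ hsep) hP
  rw [← h3, Finset.card_insert_of_notMem hxE] at this
  omega

/-- For any collection `𝒟̂ ⊆ N × ℕ` of orbit segments for `g`, the entropy
of its lift `𝒟 = {(x,n) ∈ Λ × ℕ : (π(x),n) ∈ 𝒟̂}` for `f|_Λ` is bounded by the entropy
of `𝒟̂` for `g`. -/
theorem entropy_lift_le_base
    {N : Type*} [MetricSpace N] [CompactSpace N] [ConnectedSpace N]
    {M : Type*} [MetricSpace M] [CompactSpace M]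
    (g : N → N) (hg : Continuous g)
    (f : M → M) (hf : Continuous f) (hfinj : Function.Injective f)
    (pr : M → N) (hpr : Continuous pr) (hprs : Function.Surjective pr)
    (hsemi : ∀ x : M, pr (f x) = g (pr x))
    -- (H3): uniform contraction of the fibers
    (lams : ℝ) (hlams : lams ∈ Set.Ioo (0 : ℝ) 1)
    (hH3 : ∀ x y : M, pr x = pr y → dist (f x) (f y) ≤ lams * dist x y)
    -- (H4): invariant holonomies comparing the metrics on `M` and `N`
    (hol : N → N → M → M) (C : ℝ) (hC : 1 ≤ C)
    (hholmap : ∀ a b : N, Set.MapsTo (hol a b) (pr ⁻¹' {a} ∩ Lam f) (pr ⁻¹' {b} ∩ Lam f))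
    (hholinv : ∀ a b : N, ∀ z ∈ pr ⁻¹' {a} ∩ Lam f, f (hol a b z) = hol (g a) (g b) (f z))
    (hholdist : ∀ x ∈ Lam f, ∀ y ∈ Lam f,
      (1 / C) * (dist (pr x) (pr y) + dist (hol (pr x) (pr y) x) y) ≤ dist x y ∧
      dist x y ≤ C * (dist (pr x) (pr y) + dist (hol (pr x) (pr y) x) y)) :
    ∀ Dhat : Set (N × ℕ),
      entSeg f {p : M × ℕ | p.1 ∈ Lam f ∧ (pr p.1, p.2) ∈ Dhat} ≤ entSeg g Dhat := by
  classical
  intro Dhat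
  have hC0 : 0 < C := by linarith
  have hLam : ∀ x ∈ Lam f, f x ∈ Lam f := by
    intro x hx
    simp only [Lam, Set.mem_iInter] at hx ⊢
    intro n
    obtain ⟨w, -, hw⟩ := hx n
    exact ⟨f w, trivial, by rw [← Function.iterate_succ_apply, Function.iterate_succ_apply', hw]⟩
  have hLamk : ∀ k : ℕ, ∀ x ∈ Lam f, f^[k] x ∈ Lam f := by
    intro k
    induction k with
    | zero => intro x hx; simpa using hx
    | succ k ih =>
      intro x hx
      rw [Function.iterate_succ_apply']
      exact hLam _ (ih x hx)
  have hprk : ∀ k : ℕ, ∀ x, pr (f^[k] x) = g^[k] (pr x) := by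
    intro k x
    induction k with
    | zero => rfl
    | succ k ih => rw [Function.iterate_succ_apply', Function.iterate_succ_apply', hsemi, ih]
  have hholk : ∀ k : ℕ, ∀ a b : N, ∀ z, pr z = a → z ∈ Lam f →
      f^[k] (hol a b z) = hol (g^[k] a) (g^[k] b) (f^[k] z) := by
    intro k a b z hz hzL
    induction k with
    | zero => rfl
    | succ k ih =>
      simp only [Function.iterate_succ_apply']
      rw [ih, hholinv]
      exact ⟨by simp [hprk, hz], hLamk k z hzL⟩
  have hcontr : ∀ k : ℕ, ∀ x y, pr x = pr y → dist (f^[k] x) (f^[k] y) ≤ dist x y := by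
    intro k x y hxy
    induction k with
    | zero => simp
    | succ k ih =>
      rw [Function.iterate_succ_apply', Function.iterate_succ_apply']
      refine (hH3 _ _ (by rw [hprk, hprk, hxy])).trans (le_trans ?_ ih)
      exact mul_le_of_le_one_left dist_nonneg hlams.2.le
  have hfol : ∀ k : ℕ, ∀ b : N, ∀ x ∈ Lam f,
      dist (f^[k] x) (f^[k] (hol (pr x) b x)) ≤ C * dist (g^[k] (pr x)) (g^[k] b) := by
    intro k b x hx
    have hm := hholmap (pr x) b ⟨rfl, hx⟩
    have hmb : pr (hol (pr x) b x) = b := hm.1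
    have h := (hholdist _ (hLamk k x hx) _ (hLamk k _ hm.2)).2
    rw [hprk, hprk, hmb, hholk k (pr x) b x rfl hx, dist_self, add_zero] at h
    rw [hholk k (pr x) b x rfl hx]
    exact h
  unfold entSeg pres
  refine iSup₂_le fun ε hε => ?_
  set δ : ℝ := ε / (4 * C) with hδdef
  have hδ : 0 < δ := by positivity
  have hCδ : C * δ = ε / 4 := by rw [hδdef]; field_simp
  refine le_trans ?_ (le_iSup₂ (f := fun (ε : ℝ) (_ : 0 < ε) =>
    presScale g (fun _ => (0 : ℝ)) Dhat ε) δ hδ)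
  obtain ⟨K, hK⟩ := aux_sep_bound (X := M) (ε / 2) (by positivity)
  set D : Set (M × ℕ) := {p : M × ℕ | p.1 ∈ Lam f ∧ (pr p.1, p.2) ∈ Dhat} with hD
  have hcount : ∀ n : ℕ, ∀ E : Finset M, (∀ x ∈ E, (x, n) ∈ D) → IsDynSep f n ε E →
      ∃ F : Finset N, (∀ x ∈ F, (x, n) ∈ Dhat) ∧ IsDynSep g n δ F ∧ E.card ≤ K * F.card := by
    intro n E hE hsep
    obtain ⟨F, hF1, hF2, hF3⟩ := aux_span g hg Dhat δ hδ n
    refine ⟨F, hF1, hF2, ?_⟩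
    have hex : ∀ x : M, ∃ y : N, x ∈ E → y ∈ F ∧ dynDist g n (pr x) y < δ := by
      intro x
      by_cases hx : x ∈ E
      · obtain ⟨y, h1, h2⟩ := hF3 (pr x) (hE x hx).2
        exact ⟨y, fun _ => ⟨h1, h2⟩⟩
      · exact ⟨pr x, fun h => absurd h hx⟩
    choose c hc using hex
    refine Finset.card_le_mul_card_image_of_maps_to (f := c) (fun x hx => (hc x hx).1) K ?_
    intro b hb
    set G := E.filter (fun x => c x = b) with hG
    have key : ∀ x ∈ G, ∀ y ∈ G, x ≠ y →
        ε / 2 ≤ dist (hol (pr x) b x) (hol (pr y) b y) := by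
      intro x hx y hy hne
      obtain ⟨hxE, hxb⟩ := Finset.mem_filter.1 hx
      obtain ⟨hyE, hyb⟩ := Finset.mem_filter.1 hy
      by_contra! hlt
      have h1 := hsep x hxE y hyE hne
      have hdx := (hc x hxE).2
      have hdy := (hc y hyE).2
      rw [hxb, aux_dyn_lt _ _ _ _ _ hδ] at hdx
      rw [hyb, aux_dyn_lt _ _ _ _ _ hδ] at hdy
      have hxL := (hE x hxE).1
      have hyL := (hE y hyE).1
      have : dynDist f n x y < ε := by
        rw [aux_dyn_lt _ _ _ _ _ hε]
        intro k hk
        have a1 := (hfol k b x hxL).trans (mul_le_mul_of_nonneg_left (hdx k hk).le hC0.le)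
        have a2 := (hfol k b y hyL).trans (mul_le_mul_of_nonneg_left (hdy k hk).le hC0.le)
        have hbx : pr (hol (pr x) b x) = b := (hholmap (pr x) b ⟨rfl, hxL⟩).1
        have hby : pr (hol (pr y) b y) = b := (hholmap (pr y) b ⟨rfl, hyL⟩).1
        have a3 := hcontr k _ _ (hbx.trans hby.symm)
        have a4 := dist_triangle4 (f^[k] x) (f^[k] (hol (pr x) b x)) (f^[k] (hol (pr y) b y))
          (f^[k] y)
        rw [dist_comm (f^[k] (hol (pr y) b y)) (f^[k] y)] at a4
        linarith
      linarith
    have hinj : Set.InjOn (fun x => hol (pr x) b x) (G : Set M) := by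
      intro x hx y hy hxy
      by_contra hne
      have := key x hx y hy hne
      simp only at hxy
      rw [hxy, dist_self] at this
      linarith
    rw [← Finset.card_image_of_injOn hinj]
    apply hK
    intro u hu v hv huv
    obtain ⟨x, hx, rfl⟩ := Finset.mem_image.1 hu
    obtain ⟨y, hy, rfl⟩ := Finset.mem_image.1 hv
    exact key x hx y hy (fun h => huv (by rw [h]))
  have hlog : ∀ n : ℕ, Real.log (partSum f (fun _ => (0 : ℝ)) D ε n) ≤
      Real.log (K + 1) + Real.log (partSum g (fun _ => (0 : ℝ)) Dhat δ n) := by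
    intro n
    have hlK : 0 ≤ Real.log ((K : ℝ) + 1) := Real.log_nonneg (by linarith [K.cast_nonneg (α := ℝ)])
    have hge := aux_partSum_ge g hg Dhat δ hδ n
    by_cases hemp : ∃ y, (y, n) ∈ Dhat
    · obtain ⟨y, hy⟩ := hemp
      have hg1 : 1 ≤ partSum g (fun _ => (0 : ℝ)) Dhat δ n := by
        simpa using hge {y} (by simpa using hy) (by simp [IsDynSep])
      have hle : partSum f (fun _ => (0 : ℝ)) D ε n ≤
          (K + 1) * partSum g (fun _ => (0 : ℝ)) Dhat δ n := by
        rw [aux_partSum f]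
        refine csSup_le ⟨0, ∅, by simp, by simp [IsDynSep], by simp⟩ ?_
        rintro s ⟨E, h1, h2, rfl⟩
        obtain ⟨F, hF1, hF2, hF3⟩ := hcount n E h1 h2
        have h4 := hge F hF1 hF2
        have h5 : (E.card : ℝ) ≤ K * F.card := by exact_mod_cast hF3
        have h6 : (K : ℝ) * F.card ≤ K * partSum g (fun _ => (0 : ℝ)) Dhat δ n :=
          mul_le_mul_of_nonneg_left h4 K.cast_nonneg
        linarith
      rw [← Real.log_mul (by positivity) (by linarith)]
      by_cases hz : partSum f (fun _ => (0 : ℝ)) D ε n = 0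
      · rw [hz, Real.log_zero]
        apply Real.log_nonneg
        nlinarith [K.cast_nonneg (α := ℝ)]
      · have hnn : 0 ≤ partSum f (fun _ => (0 : ℝ)) D ε n := by
          rw [aux_partSum]
          apply Real.sSup_nonneg
          rintro s ⟨E, -, -, rfl⟩
          positivity
        exact Real.log_le_log (lt_of_le_of_ne hnn (Ne.symm hz)) hle
    · push Not at hemp
      have e1 : partSum f (fun _ => (0 : ℝ)) D ε n = 0 := by
        rw [aux_partSum]
        apply le_antisymm
        · apply Real.sSup_nonpos
          rintro s ⟨E, h1, -, rfl⟩
          have : E = ∅ := Finset.eq_empty_of_forall_notMem fun x hx => hemp _ (h1 x hx).2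
          simp [this]
        · apply Real.sSup_nonneg
          rintro s ⟨E, -, -, rfl⟩
          positivity
      have e2 : partSum g (fun _ => (0 : ℝ)) Dhat δ n = 0 := by
        rw [aux_partSum]
        apply le_antisymm
        · apply Real.sSup_nonpos
          rintro s ⟨E, h1, -, rfl⟩
          have : E = ∅ := Finset.eq_empty_of_forall_notMem fun x hx => hemp _ (h1 x hx)
          simp [this]
        · apply Real.sSup_nonneg
          rintro s ⟨E, -, -, rfl⟩
          positivity
      rw [e1, e2, Real.log_zero]
      linarith
  unfold presScale
  have hlim : limsup (fun n : ℕ => ((Real.log (K + 1) / n : ℝ) : EReal)) atTop = 0 := by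
    apply Tendsto.limsup_eq
    have := tendsto_const_div_atTop_nhds_zero_nat (Real.log ((K : ℝ) + 1))
    exact_mod_cast (continuous_coe_real_ereal.tendsto 0).comp this
  calc _ ≤ limsup ((fun n : ℕ => ((Real.log (K + 1) / n : ℝ) : EReal)) +
        (fun n : ℕ => ((Real.log (partSum g (fun _ => (0 : ℝ)) Dhat δ n) / n : ℝ) : EReal)))
          atTop := by
        refine limsup_le_limsup (Eventually.of_forall fun n => ?_)
        simp only [Pi.add_apply]
        rw [← EReal.coe_add, EReal.coe_le_coe_iff, ← add_div]
        exact div_le_div_of_nonneg_right (hlog n) n.cast_nonneg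
    _ ≤ _ := EReal.limsup_add_le (Or.inl (by rw [hlim]; simp)) (Or.inl (by rw [hlim]; simp))
    _ = _ := by rw [hlim, zero_add]
end

section
/- There exists δ_0 > 0 such that for every (x̂, n) ∈ 𝒢̂ and every 1 ≤ j ≤ n, the inverse branch of g^j that sends g^n(x̂) to g^{n−j}(x̂) is defined on the ball B(g^n(x̂), δ_0) and is a θ_α^j-contraction there, i.e. it is Lipschitz with constant θ_α^j on B(g^n(x̂), δ_0). -/
open Classical in
/-- Upper bound for the local contraction rate. -/
noncomputable def crate {N : Type*} (A : Set N) (L lamu : ℝ) (x : N) : ℝ :=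
  if x ∈ A then L else lamu

lemma crate_pos {N : Type*} (A : Set N) {L lamu : ℝ} (hL : 1 < L) (hl : 0 < lamu) (x : N) :
    0 < crate A L lamu x := by
  unfold crate; split_ifs <;> linarith

lemma one_step {N : Type*} [MetricSpace N] [CompactSpace N]
    (g : N → N) (hg : Continuous g) (Lf : N → ℝ)
    (hbranch : ∀ x : N, ∃ U : Set N, IsOpen U ∧ x ∈ U ∧ Set.InjOn g U ∧
      IsOpen (g '' U) ∧ ∀ y ∈ U, ∀ z ∈ U, dist y z ≤ Lf x * dist (g y) (g z))
    (lamu L : ℝ) (hlamu : lamu ∈ Set.Ioo (0 : ℝ) 1) (hL : 1 < L) (Ω : Set N)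
    (hH1a : ∀ x ∈ Ω, Lf x ≤ L) (hH1b : ∀ x ∉ Ω, Lf x < lamu) (ρ : ℝ) (hρ : 0 < ρ) :
    ∃ δ : ℝ, 0 < δ ∧ ∀ x : N, ∃ h : N → N, h (g x) = x ∧
      (∀ y ∈ Metric.ball (g x) δ, g (h y) = y) ∧
      ∀ y ∈ Metric.ball (g x) δ, ∀ z ∈ Metric.ball (g x) δ,
        dist (h y) (h z) ≤ crate (Omr Ω ρ) L lamu x * dist y z := by
  classical
  choose U hUo hxU hinj hgo hlip using hbranch
  have hr : ∀ p, ∃ r > 0, Metric.ball (g p) r ⊆ g '' U p := fun p =>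
    Metric.isOpen_iff.1 (hgo p) _ ⟨p, hxU p, rfl⟩
  choose r hr0 hrs using hr
  let V : N → Set N := fun p => U p ∩ g ⁻¹' Metric.ball (g p) (r p / 2) ∩ Metric.ball p ρ
  have hVo : ∀ p, IsOpen (V p) := fun p =>
    ((hUo p).inter (Metric.isOpen_ball.preimage hg)).inter Metric.isOpen_ball
  have hpV : ∀ p, p ∈ V p := fun p =>
    ⟨⟨hxU p, Metric.mem_ball_self (half_pos (hr0 p))⟩, Metric.mem_ball_self hρ⟩
  obtain ⟨t, ht⟩ := isCompact_univ.elim_finite_subcover V hVo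
    (fun p _ => Set.mem_iUnion.2 ⟨p, hpV p⟩)
  have hδ : ∃ δ : ℝ, 0 < δ ∧ ∀ p ∈ t, δ ≤ r p / 2 := by
    clear ht
    induction t using Finset.induction_on with
    | empty => exact ⟨1, one_pos, by simp⟩
    | insert a s ha ih =>
      obtain ⟨δ, h0, h⟩ := ih
      refine ⟨min δ (r a / 2), lt_min h0 (half_pos (hr0 a)), ?_⟩
      intro p hp
      rcases Finset.mem_insert.1 hp with rfl | hp
      · exact min_le_right _ _
      · exact (min_le_left _ _).trans (h p hp)
  obtain ⟨δ, hδ0, hδ⟩ := hδ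
  refine ⟨δ, hδ0, fun x => ?_⟩
  obtain ⟨p, hpt, hxp⟩ := Set.mem_iUnion₂.1 (ht (Set.mem_univ x))
  obtain ⟨⟨hx1, hx2⟩, hx3⟩ := hxp
  have hsub : ∀ y ∈ Metric.ball (g x) δ, ∃ u ∈ U p, g u = y := by
    intro y hy
    apply hrs p
    have h1 := hδ p hpt
    have h2 : dist (g x) (g p) < r p / 2 := hx2
    have h3 : dist y (g x) < δ := hy
    have h4 := dist_triangle y (g x) (g p)
    rw [Metric.mem_ball]; linarith
  choose! h hU hgh using hsub
  have hc : Lf p ≤ crate (Omr Ω ρ) L lamu x := by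
    unfold crate
    split_ifs with hx
    · by_cases hp : p ∈ Ω
      · exact hH1a p hp
      · linarith [hH1b p hp, hlamu.2]
    · have hp : p ∉ Ω := fun hp => hx (Set.mem_iUnion₂.2 ⟨p, hp, hx3⟩)
      exact (hH1b p hp).le
  have hself : g x ∈ Metric.ball (g x) δ := Metric.mem_ball_self hδ0
  refine ⟨h, hinj p (hU _ hself) hx1 (hgh _ hself), hgh, fun y hy z hz => ?_⟩
  have := hlip p _ (hU y hy) _ (hU z hz)
  rw [hgh y hy, hgh z hz] at this
  exact this.trans (mul_le_mul_of_nonneg_right hc dist_nonneg)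

lemma theta_lt_one (lamu L α : ℝ) (hlamu : lamu ∈ Set.Ioo (0 : ℝ) 1) (hL : 1 < L)
    (hαlt : α < Real.log lamu / (Real.log lamu - Real.log L)) :
    L ^ α * lamu ^ (1 - α) ≤ 1 := by
  have h1 := Real.log_neg hlamu.1 hlamu.2
  have h2 := Real.log_pos hL
  rw [lt_div_iff_of_neg (by linarith)] at hαlt
  rw [Real.rpow_def_of_pos (by linarith), Real.rpow_def_of_pos hlamu.1, ← Real.exp_add]
  apply Real.exp_le_one_iff.2
  nlinarith

lemma prod_le {N : Type*} (A : Set N) (lamu L α : ℝ) (hlamu : lamu ∈ Set.Ioo (0 : ℝ) 1)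
    (hL : 1 < L) (s : Finset ℕ) (o : ℕ → N) (j : ℕ) (hs : s.card = j) (hj : 1 ≤ j)
    (h : (1 / (j : ℝ)) * ∑ i ∈ s, Set.indicator A (fun _ => (1 : ℝ)) (o i) < α) :
    ∏ i ∈ s, crate A L lamu (o i) ≤ (L ^ α * lamu ^ (1 - α)) ^ j := by
  have h1 := Real.log_neg hlamu.1 hlamu.2
  have h2 := Real.log_pos hL
  have hj' : (0 : ℝ) < j := by exact_mod_cast hj
  have hc : ∀ x, crate A L lamu x = Real.exp (Real.log lamu +
      (Real.log L - Real.log lamu) * Set.indicator A (fun _ => (1 : ℝ)) x) := by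
    intro x
    unfold crate
    by_cases hx : x ∈ A
    · simp [hx, Real.exp_log (show 0 < L by linarith)]
    · simp [hx, Real.exp_log hlamu.1]
  simp_rw [hc]
  rw [← Real.exp_sum, Finset.sum_add_distrib, ← Finset.mul_sum, Finset.sum_const, hs,
    Real.rpow_def_of_pos (by linarith), Real.rpow_def_of_pos hlamu.1, ← Real.exp_add,
    ← Real.exp_nat_mul]
  apply Real.exp_le_exp.2
  rw [one_div, inv_mul_lt_iff₀ hj'] at h
  rw [nsmul_eq_mul]
  nlinarith [mul_lt_mul_of_pos_left h (show 0 < Real.log L - Real.log lamu by linarith)]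

/-- There exists `δ₀ > 0` such that for every good orbit segment
`(x̂,n) ∈ 𝒢̂` and every `1 ≤ j ≤ n`, the inverse branch of `g^j` sending `g^n(x̂)` to
`g^{n-j}(x̂)` is defined on the ball `B(g^n(x̂), δ₀)` and is a `θ_α^j`-contraction there,
where `θ_α = L^α λ_u^{1-α}`. -/
theorem goodSeg_backward_contraction
    {N : Type*} [MetricSpace N] [CompactSpace N] [ConnectedSpace N]
    (g : N → N) (hg : Continuous g)
    (Lf : N → ℝ) (hLfpos : ∀ x, 0 < Lf x)
    (hbranch : ∀ x : N, ∃ U : Set N, IsOpen U ∧ x ∈ U ∧ Set.InjOn g U ∧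
      IsOpen (g '' U) ∧ ∀ y ∈ U, ∀ z ∈ U, dist y z ≤ Lf x * dist (g y) (g z))
    (hexact : ∀ U : Set N, IsOpen U → U.Nonempty → ∃ n : ℕ, g^[n] '' U = Set.univ)
    (lamu L : ℝ) (hlamu : lamu ∈ Set.Ioo (0 : ℝ) 1) (hL : 1 < L)
    (Ω : Set N) (hΩ : IsOpen Ω)
    (hH1a : ∀ x ∈ Ω, Lf x ≤ L) (hH1b : ∀ x ∉ Ω, Lf x < lamu)
    (P : Finset (Set N)) (hPcov : ⋃₀ (P : Set (Set N)) = Set.univ)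
    (hPinj : ∀ U ∈ P, Set.InjOn g U)
    (ρ : ℝ) (hρ : 0 < ρ)
    (α : ℝ) (hα : α ∈ Set.Ioo (0 : ℝ) 1)
    (hαlt : α < Real.log lamu / (Real.log lamu - Real.log L)) :
    ∃ δ₀ : ℝ, 0 < δ₀ ∧
      ∀ x : N, ∀ n : ℕ, (x, n) ∈ goodSeg g (Omr Ω ρ) α →
        ∀ j : ℕ, 1 ≤ j → j ≤ n →
          ∃ invb : N → N,
            (∀ y ∈ Metric.ball (g^[n] x) δ₀, g^[j] (invb y) = y) ∧
            invb (g^[n] x) = g^[n - j] x ∧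
            (∀ y ∈ Metric.ball (g^[n] x) δ₀, ∀ z ∈ Metric.ball (g^[n] x) δ₀,
              dist (invb y) (invb z) ≤ (L ^ α * lamu ^ (1 - α)) ^ j * dist y z) := by
  obtain ⟨δ, hδ0, hδ⟩ := one_step g hg Lf hbranch lamu L hlamu hL Ω hH1a hH1b ρ hρ
  have hth := theta_lt_one lamu L α hlamu hL hαlt
  have hth0 : 0 ≤ L ^ α * lamu ^ (1 - α) :=
    mul_nonneg (Real.rpow_nonneg (by linarith) _) (Real.rpow_nonneg hlamu.1.le _)
  refine ⟨δ, hδ0, fun x n hgood => ?_⟩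
  have hprod : ∀ j, 1 ≤ j → j ≤ n →
      ∏ i ∈ Finset.Ico (n - j) n, crate (Omr Ω ρ) L lamu (g^[i] x)
        ≤ (L ^ α * lamu ^ (1 - α)) ^ j := by
    intro j hj hjn
    rcases hgood with h0 | h
    · have h0 : n = 0 := h0
      omega
    · exact prod_le _ lamu L α hlamu hL _ (fun i => g^[i] x) j
        (by rw [Nat.card_Ico]; omega) hj (h j hj hjn)
  have hprod1 : ∀ j, j ≤ n →
      ∏ i ∈ Finset.Ico (n - j) n, crate (Omr Ω ρ) L lamu (g^[i] x) ≤ 1 := by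
    intro j hjn
    rcases Nat.eq_zero_or_pos j with rfl | hj
    · simp
    · exact (hprod j hj hjn).trans (pow_le_one₀ hth0 hth)
  have key : ∀ j, j ≤ n → ∃ invb : N → N,
      (∀ y ∈ Metric.ball (g^[n] x) δ, g^[j] (invb y) = y) ∧
      invb (g^[n] x) = g^[n - j] x ∧
      (∀ y ∈ Metric.ball (g^[n] x) δ, ∀ z ∈ Metric.ball (g^[n] x) δ,
        dist (invb y) (invb z) ≤
          (∏ i ∈ Finset.Ico (n - j) n, crate (Omr Ω ρ) L lamu (g^[i] x)) * dist y z) := by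
    intro j
    induction j with
    | zero => intro _; exact ⟨id, by simp, by simp, by simp⟩
    | succ j ih =>
      intro hj
      obtain ⟨f, hf1, hf2, hf3⟩ := ih (by omega)
      obtain ⟨h, hh1, hh2, hh3⟩ := hδ (g^[n - (j + 1)] x)
      have hidx : n - j = (n - (j + 1)) + 1 := by omega
      have hgx : g (g^[n - (j + 1)] x) = g^[n - j] x := by
        rw [hidx, Function.iterate_succ_apply']
      rw [hgx] at hh1 hh2 hh3
      have hmem : ∀ y ∈ Metric.ball (g^[n] x) δ, f y ∈ Metric.ball (g^[n - j] x) δ := by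
        intro y hy
        have h1 := hf3 y hy _ (Metric.mem_ball_self hδ0)
        rw [hf2] at h1
        have h2 := mul_le_mul_of_nonneg_right (hprod1 j (by omega))
          (dist_nonneg (x := y) (y := g^[n] x))
        have h3 : dist y (g^[n] x) < δ := hy
        rw [Metric.mem_ball]; linarith
      refine ⟨fun y => h (f y), ?_, ?_, ?_⟩
      · intro y hy
        rw [Function.iterate_succ_apply, hh2 _ (hmem y hy), hf1 y hy]
      · simp only [hf2, hh1]
      · intro y hy z hz
        have h1 := hh3 _ (hmem y hy) _ (hmem z hz)
        have h2 := mul_le_mul_of_nonneg_left (hf3 y hy z hz)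
          (crate_pos (Omr Ω ρ) hL hlamu.1 (g^[n - (j + 1)] x)).le
        rw [Finset.prod_eq_prod_Ico_succ_bot (by omega), ← hidx, mul_assoc]
        exact h1.trans h2
  intro j hj hjn
  obtain ⟨f, hf1, hf2, hf3⟩ := key j hjn
  exact ⟨f, hf1, hf2, fun y hy z hz => (hf3 y hy z hz).trans
    (mul_le_mul_of_nonneg_right (hprod j hj hjn) dist_nonneg)⟩
end

section
/- Concatenation property of good orbit segments: if (x, n) ∈ 𝒢 and (f^n(x), m) ∈ 𝒢, then (x, n + m) ∈ 𝒢. -/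
theorem goodSeg_iff_aux {X : Type*} (f : X → X) (A : Set X) (α : ℝ) (x : X) (n : ℕ) :
    (x, n) ∈ goodSeg f A α ↔ ∀ j : ℕ, 1 ≤ j → j ≤ n →
      ∑ i ∈ Finset.Ico (n - j) n, Set.indicator A (fun _ => (1 : ℝ)) (f^[i] x) < j * α := by
  have key : ∀ j : ℕ, 1 ≤ j → ∀ S : ℝ, (1 / (j : ℝ)) * S < α ↔ S < j * α := by
    intro j hj S
    have : (0 : ℝ) < j := by exact_mod_cast hj
    rw [one_div, inv_mul_lt_iff₀ this]
  constructor
  · rintro (h | h) j hj hjn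
    · simp only at h
      omega
    · exact (key j hj _).1 (h j hj hjn)
  · intro h
    right
    intro j hj hjn
    exact (key j hj _).2 (h j hj hjn)

/-- Concatenation property of good orbit segments: if `(x,n) ∈ 𝒢` and
`(f^n(x), m) ∈ 𝒢`, then `(x, n+m) ∈ 𝒢`. -/
theorem goodSeg_concat {X : Type*} (f : X → X) (A : Set X) (α : ℝ)
    (x : X) (n m : ℕ)
    (h₁ : (x, n) ∈ goodSeg f A α) (h₂ : (f^[n] x, m) ∈ goodSeg f A α) :
    (x, n + m) ∈ goodSeg f A α := by
  rw [goodSeg_iff_aux] at *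
  have shift : ∀ a : ℕ, ∑ i ∈ Finset.Ico (n + a) (n + m),
      Set.indicator A (fun _ => (1 : ℝ)) (f^[i] x) =
      ∑ i ∈ Finset.Ico a m, Set.indicator A (fun _ => (1 : ℝ)) (f^[i] (f^[n] x)) := by
    intro a
    rw [add_comm n a, add_comm n m, ← Finset.sum_Ico_add']
    simp only [Function.iterate_add_apply]
  intro j hj hjn
  by_cases hjm : j ≤ m
  · have e : n + m - j = n + (m - j) := by omega
    rw [e, shift]
    exact h₂ j hj hjm
  · obtain ⟨k, rfl⟩ : ∃ k, j = k + m := ⟨j - m, by omega⟩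
    have hk := h₁ k (by omega) (by omega)
    have e : n + m - (k + m) = n - k := by omega
    rw [e, ← Finset.sum_Ico_consecutive _ (Nat.sub_le n k) (Nat.le_add_right n m)]
    have s0 := shift 0
    rw [add_zero] at s0
    rw [s0]
    push_cast
    rcases Nat.eq_zero_or_pos m with h0 | h0
    · subst h0
      simpa using hk
    · have hm := h₂ m h0 le_rfl
      rw [Nat.sub_self] at hm
      linarith
end

section
/- Decomposition of orbit segments: for every x ∈ X and n ∈ ℕ, let s be the largest element of {0, 1, …, n} such that (x, s) ∈ 𝒢. If s < n, then (f^s(x), n − s) ∈ 𝒮, i.e. (1/(n−s)) ∑_{i=s}^{n−1} χ_A(f^i x) ≥ α. -/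
theorem avg_lt_iff_aux (c : ℕ → ℝ) (α : ℝ) (k m : ℕ) (h : k < m) :
    (1 / ((m - k : ℕ) : ℝ)) * ∑ i ∈ Finset.Ico k m, c i < α ↔
      (∑ i ∈ Finset.range m, c i) - α * m < (∑ i ∈ Finset.range k, c i) - α * k := by
  have hp : (0 : ℝ) < (m : ℝ) - k := by
    have : (k : ℝ) < m := by exact_mod_cast h
    linarith
  rw [Finset.sum_Ico_eq_sub _ h.le, Nat.cast_sub h.le, one_div_mul_eq_div, div_lt_iff₀ hp]
  constructor <;> intro h <;> linarith

/-- Decomposition of orbit segments: if `s` is the largest element of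
`{0,…,n}` with `(x,s) ∈ 𝒢` and `s < n`, then `(f^s(x), n-s) ∈ 𝒮`, i.e. the average of
`χ_A` over the orbit segment from time `s` to time `n` is at least `α`. -/
theorem goodSeg_decomposition {X : Type*} (f : X → X) (A : Set X) (α : ℝ)
    (x : X) (n s : ℕ) (hsn : s ≤ n)
    (hs : (x, s) ∈ goodSeg f A α)
    (hmax : ∀ t : ℕ, t ≤ n → (x, t) ∈ goodSeg f A α → t ≤ s)
    (hlt : s < n) :
    α ≤ (1 / ((n - s : ℕ) : ℝ)) * ∑ i ∈ Finset.Ico s n,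
      Set.indicator A (fun _ => (1 : ℝ)) (f^[i] x) := by
  set c : ℕ → ℝ := fun i => Set.indicator A (fun _ => (1 : ℝ)) (f^[i] x) with hc
  have good : ∀ t : ℕ, (x, t) ∈ goodSeg f A α ↔ ∀ k < t,
      (∑ i ∈ Finset.range t, c i) - α * t < (∑ i ∈ Finset.range k, c i) - α * k := by
    intro t
    constructor
    · rintro (h | h) k hk
      · simp only at h
        omega
      · have h1 := h (t - k) (by omega) (Nat.sub_le _ _)
        simp only [Nat.sub_sub_self hk.le] at h1
        exact (avg_lt_iff_aux c α k t hk).1 h1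
    · intro h
      right
      intro j hj hjt
      simp only at hjt
      have h1 := (avg_lt_iff_aux c α (t - j) t (by omega)).2 (h (t - j) (by omega))
      rw [Nat.sub_sub_self hjt] at h1
      exact h1
  have key : ∀ m : ℕ, s ≤ m → m ≤ n →
      (∑ i ∈ Finset.range s, c i) - α * s ≤ (∑ i ∈ Finset.range m, c i) - α * m := by
    intro m
    induction m using Nat.strong_induction_on with
    | _ m ih =>
      intro h1 h2
      rcases h1.eq_or_lt with rfl | h3
      · exact le_rfl
      · have hn : ¬ (x, m) ∈ goodSeg f A α := fun h => absurd (hmax m h2 h) (by omega)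
        rw [good] at hn
        push Not at hn
        obtain ⟨k, hk, hkm⟩ := hn
        rcases lt_or_ge k s with h4 | h4
        · exact (((good s).1 hs k h4).le).trans hkm
        · exact (ih k hk h4 (by omega)).trans hkm
  by_contra hcon
  exact absurd ((avg_lt_iff_aux c α s n hlt).1 (not_le.1 hcon)) (not_lt.2 (key n hsn le_rfl))
end
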